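/- Let α be real with 0 < α ≤ 2. Then for every real θ, the series Σ_{k ∈ ℤ} w_k^α e^{i k θ} converges absolutely and equals (2 − 2 cos θ)^{α/2} = |2 sin(θ/2)|^α, where w_k^α = (−1)^k Γ(α+1) / (Γ(α/2 − k + 1) Γ(α/2 + k + 1)). -/

import Mathlib

open Real Complex

/-- The fractional centered-difference weights
`w_k^α = (−1)^k Γ(α+1) / (Γ(α/2 − k + 1) Γ(α/2 + k + 1))`. -/
noncomputable def fracWeight (α : ℝ) (k : ℤ) : ℝ :=
  (-1 : ℝ) ^ k * Real.Gamma (α + 1) /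
    (Real.Gamma (α / 2 - k + 1) * Real.Gamma (α / 2 + k + 1))

/-!
The weights satisfy `(k + 1 + α/2) w_{k+1} = (k - α/2) w_k`. The symbol `S(θ) = |2 sin(θ/2)|^α`
solves `(1 - e^{-iθ}) S' = i (α/2) (1 + e^{-iθ}) S` away from `2πℤ`, and integrating the derivative
of `e^{-ikθ} (1 - e^{-iθ}) S(θ)` over a period gives the same recurrence for its Fourier
coefficients. The zeroth coefficient is a Beta integral, which Legendre's duplication formula
identifies with `w_0`, so all Fourier coefficients of `S` are the `w_k`. By the recurrence
`∑ |w_k|` is dominated by a telescoping series, so the Fourier series of the continuous function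
`S` converges to it pointwise.
-/

lemma summable_of_le_sub_succ {f g : ℕ → ℝ} (hf : ∀ n, 0 ≤ f n) (hg : ∀ n, 0 ≤ g n)
    (hfg : ∀ n, f n ≤ g n - g (n + 1)) : Summable f := by
  refine summable_of_sum_range_le (c := g 0) hf fun N => ?_
  calc ∑ n ∈ Finset.range N, f n
      ≤ ∑ n ∈ Finset.range N, (g n - g (n + 1)) := Finset.sum_le_sum fun n _ => hfg n
    _ = g 0 - g N := Finset.sum_range_sub' g N
    _ ≤ g 0 := sub_le_self _ (hg N)

lemma eq_of_int_recurrence {R : Type*} [MulZeroClass R] [IsLeftCancelMulZero R] {p q u v : ℤ → R}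
    (hp : ∀ k, 0 ≤ k → p k ≠ 0) (hq : ∀ k, k < 0 → q k ≠ 0)
    (hu : ∀ k, p k * u (k + 1) = q k * u k) (hv : ∀ k, p k * v (k + 1) = q k * v k)
    (h0 : u 0 = v 0) : u = v := by
  funext k
  induction k using Int.induction_on with
  | zero => exact h0
  | succ n ih =>
    refine mul_left_cancel₀ (hp n n.cast_nonneg) ?_
    rw [hu, hv, ih]
  | pred n ih =>
    refine mul_left_cancel₀ (hq (-n - 1) (by lia)) ?_
    rw [← hu, ← hv, sub_add_cancel, ih]

lemma one_sub_exp_mul_sin (z : ℂ) :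
    (1 - Complex.exp (-(Complex.I * z))) * Complex.sin z =
      Complex.I * (1 + Complex.exp (-(Complex.I * z))) * (1 - Complex.cos z) := by
  have hexp : Complex.exp (-(Complex.I * z)) = Complex.cos z - Complex.sin z * Complex.I := by
    rw [mul_comm, ← neg_mul, Complex.exp_mul_I, Complex.cos_neg, Complex.sin_neg, neg_mul,
      ← sub_eq_add_neg]
  rw [hexp]
  linear_combination Complex.I * Complex.sin_sq_add_cos_sq z -
    Complex.sin z * (Complex.cos z - 1) * Complex.I_sq

lemma exp_neg_I_mul_add_one_mul (z w : ℂ) :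
    Complex.exp (-(Complex.I * (z + 1) * w)) =
      Complex.exp (-(Complex.I * z * w)) * Complex.exp (-(Complex.I * w)) := by
  rw [← Complex.exp_add]
  congr 1
  ring

lemma hasDerivAt_exp_neg_I_mul (z : ℂ) (θ : ℝ) :
    HasDerivAt (fun t : ℝ => Complex.exp (-(Complex.I * z * t)))
      (-(Complex.I * z) * Complex.exp (-(Complex.I * z * θ))) θ := by
  have h := ((hasDerivAt_id' (θ : ℂ)).const_mul (Complex.I * z)).fun_neg.cexp.comp_ofReal
  exact h.congr_deriv (by ring)

section BetaIntegral

open MeasureTheory ProbabilityTheory Set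

variable {a b s : ℝ}

lemma integral_rpow_mul_one_sub_rpow (ha : 0 < a) (hb : 0 < b) :
    ∫ x in (0 : ℝ)..1, x ^ (a - 1) * (1 - x) ^ (b - 1) = beta a b := by
  have hcast : betaIntegral a b =
      ∫ x in (0 : ℝ)..1, ((x ^ (a - 1) * (1 - x) ^ (b - 1) : ℝ) : ℂ) := by
    refine intervalIntegral.integral_congr fun x hx => ?_
    rw [uIcc_of_le zero_le_one] at hx
    simp only [ofReal_mul, ofReal_cpow hx.1, ofReal_cpow (sub_nonneg.2 hx.2), ofReal_sub,
      ofReal_one]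
  rw [beta_eq_betaIntegralReal a b ha hb, hcast, intervalIntegral.integral_ofReal, ofReal_re]

lemma image_sin_sq_Ioo : (fun θ => Real.sin θ ^ 2) '' Ioo 0 (π / 2) = Ioo 0 1 := by
  ext x
  constructor
  · rintro ⟨θ, ⟨hθ0, hθ⟩, rfl⟩
    have hsin : 0 < Real.sin θ := Real.sin_pos_of_pos_of_lt_pi hθ0 (by linarith)
    have hcos : 0 < Real.cos θ := Real.cos_pos_of_mem_Ioo ⟨by linarith, hθ⟩
    exact ⟨by positivity, by nlinarith [Real.sin_sq_add_cos_sq θ]⟩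
  · rintro ⟨hx0, hx1⟩
    refine ⟨Real.arcsin √x, ⟨Real.arcsin_pos.2 (Real.sqrt_pos.2 hx0), ?_⟩, ?_⟩
    · exact Real.arcsin_lt_pi_div_two.2 ((Real.sqrt_lt' one_pos).2 (by simpa using hx1))
    · have hx : √x ≤ 1 := Real.sqrt_le_one.2 hx1.le
      simp only [Real.sin_arcsin (by linarith [Real.sqrt_nonneg x]) hx, Real.sq_sqrt hx0.le]

lemma integral_sin_rpow_mul_cos_rpow (ha : 0 < a) (hb : 0 < b) :
    ∫ θ in (0 : ℝ)..π / 2, Real.sin θ ^ (2 * a - 1) * Real.cos θ ^ (2 * b - 1) =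
      beta a b / 2 := by
  have hmono : MonotoneOn (fun θ => Real.sin θ ^ 2) (Ioo 0 (π / 2)) :=
    fun x ⟨hx0, hx⟩ y ⟨_, hy⟩ hxy => pow_le_pow_left₀
      (Real.sin_nonneg_of_nonneg_of_le_pi hx0.le (by linarith))
      (Real.sin_le_sin_of_le_of_le_pi_div_two (by linarith) hy.le hxy) 2
  have hderiv (θ : ℝ) :
      HasDerivAt (fun θ => Real.sin θ ^ 2) (2 * Real.sin θ * Real.cos θ) θ := by
    simpa using (Real.hasDerivAt_sin θ).fun_pow 2
  have hpull : ∀ θ ∈ Ioo 0 (π / 2),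
      (2 * Real.sin θ * Real.cos θ) •
          ((Real.sin θ ^ 2) ^ (a - 1) * (1 - Real.sin θ ^ 2) ^ (b - 1)) =
        2 * (Real.sin θ ^ (2 * a - 1) * Real.cos θ ^ (2 * b - 1)) := by
    rintro θ ⟨hθ0, hθ⟩
    have hsin : 0 < Real.sin θ := Real.sin_pos_of_pos_of_lt_pi hθ0 (by linarith)
    have hcos : 0 < Real.cos θ := Real.cos_pos_of_mem_Ioo ⟨by linarith, hθ⟩
    have mul_sq_rpow {y : ℝ} (hy : 0 < y) (c : ℝ) : y * (y ^ 2) ^ (c - 1) = y ^ (2 * c - 1) := by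
      rw [← Real.rpow_natCast_mul hy.le, mul_comm, ← Real.rpow_add_one hy.ne']
      congr 1; push_cast; ring
    rw [← Real.cos_sq', ← mul_sq_rpow hsin, ← mul_sq_rpow hcos, smul_eq_mul]
    ring
  have hsubst := integral_image_eq_integral_deriv_smul_of_monotoneOn measurableSet_Ioo
    (fun θ _ => (hderiv θ).hasDerivWithinAt) hmono fun x => x ^ (a - 1) * (1 - x) ^ (b - 1)
  rw [image_sin_sq_Ioo, setIntegral_congr_fun measurableSet_Ioo hpull,
    ← integral_Ioc_eq_integral_Ioo, ← integral_Ioc_eq_integral_Ioo,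
    ← intervalIntegral.integral_of_le zero_le_one,
    ← intervalIntegral.integral_of_le (by positivity),
    integral_rpow_mul_one_sub_rpow ha hb, intervalIntegral.integral_const_mul] at hsubst
  linarith

lemma integral_sin_rpow_eq_beta (hs : -1 < s) :
    ∫ θ in (0 : ℝ)..π, Real.sin θ ^ s = 2 ^ s * beta ((s + 1) / 2) ((s + 1) / 2) := by
  have hdouble : EqOn (fun θ => Real.sin (2 * θ) ^ s)
      (fun θ => 2 ^ s * (Real.sin θ ^ (2 * ((s + 1) / 2) - 1) *
        Real.cos θ ^ (2 * ((s + 1) / 2) - 1))) (uIcc 0 (π / 2)) := by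
    rw [uIcc_of_le (by positivity)]
    rintro θ ⟨hθ0, hθ⟩
    have hsin : 0 ≤ Real.sin θ := Real.sin_nonneg_of_nonneg_of_le_pi hθ0 (by linarith)
    have hcos : 0 ≤ Real.cos θ := Real.cos_nonneg_of_mem_Icc ⟨by linarith, hθ⟩
    have hexp : 2 * ((s + 1) / 2) - 1 = s := by ring
    simp only [Real.sin_two_mul, hexp]
    rw [Real.mul_rpow (by positivity) hcos, Real.mul_rpow zero_le_two hsin, mul_assoc]
  calc ∫ θ in (0 : ℝ)..π, Real.sin θ ^ s
      = 2 * ∫ θ in (0 : ℝ)..π / 2, Real.sin (2 * θ) ^ s := by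
        rw [← smul_eq_mul, intervalIntegral.smul_integral_comp_mul_left (fun θ => Real.sin θ ^ s)]
        simp [mul_div_cancel₀]
    _ = 2 ^ s * beta ((s + 1) / 2) ((s + 1) / 2) := by
        rw [intervalIntegral.integral_congr hdouble, intervalIntegral.integral_const_mul,
          integral_sin_rpow_mul_cos_rpow (by linarith) (by linarith)]
        ring

lemma integral_sin_rpow (hs : -1 < s) :
    ∫ θ in (0 : ℝ)..π, Real.sin θ ^ s =
      π * 2 ^ (-s) * Real.Gamma (s + 1) / Real.Gamma (s / 2 + 1) ^ 2 := by
  have hhalf : 0 < Real.Gamma (s / 2 + 1) := Real.Gamma_pos_of_pos (by linarith)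
  have hone : 0 < Real.Gamma (s + 1) := Real.Gamma_pos_of_pos (by linarith)
  have hduplication : Real.Gamma ((s + 1) / 2) * Real.Gamma (s / 2 + 1) =
      Real.Gamma (s + 1) * 2 ^ (-s) * √π := by
    have h := Real.Gamma_mul_Gamma_add_half ((s + 1) / 2)
    rwa [show (s + 1) / 2 + 1 / 2 = s / 2 + 1 by ring, show 2 * ((s + 1) / 2) = s + 1 by ring,
      show 1 - (s + 1) = -s by ring] at h
  rw [integral_sin_rpow_eq_beta hs, beta, add_halves, eq_div_of_mul_eq hhalf.ne' hduplication,
    Real.rpow_neg zero_le_two]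
  field_simp
  rw [Real.sq_sqrt pi_pos.le]

end BetaIntegral

lemma fourierCoeffOn_two_pi (f : ℝ → ℂ) (k : ℤ) :
    fourierCoeffOn two_pi_pos f k =
      (2 * π : ℂ)⁻¹ * ∫ θ in (0 : ℝ)..2 * π, Complex.exp (-(Complex.I * k * θ)) * f θ := by
  rw [fourierCoeffOn_eq_integral, sub_zero, one_div, Complex.real_smul]
  push_cast
  congr 2 with θ
  rw [fourier_coe_apply, smul_eq_mul]
  congr 2
  push_cast
  field_simp

lemma hasSum_fourierCoeffOn_mul_exp {f : ℝ → ℂ} (hf : Continuous f)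
    (hper : Function.Periodic f (2 * π)) (hsum : Summable (fourierCoeffOn two_pi_pos f))
    (θ : ℝ) :
    HasSum (fun k : ℤ => fourierCoeffOn two_pi_pos f k * Complex.exp (Complex.I * k * θ))
      (f θ) := by
  have : Fact (0 < 2 * π) := ⟨two_pi_pos⟩
  let F : C(AddCircle (2 * π), ℂ) := ⟨hper.lift, continuous_coinduced_dom.2 hf⟩
  have hcoeff : fourierCoeff F = fourierCoeffOn two_pi_pos f := by
    funext k
    rw [fourierCoeff_eq_intervalIntegral F k 0, fourierCoeffOn_eq_integral]
    simp only [zero_add, sub_zero, fourier_coe_apply]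
    rfl
  have hF := has_pointwise_sum_fourier_series_of_summable (hcoeff ▸ hsum) (θ : AddCircle (2 * π))
  rw [hcoeff] at hF
  convert! hF using 3 with k
  rw [fourier_coe_apply]
  congr 1
  push_cast
  field_simp

lemma inv_Gamma_eq_self_mul_inv_Gamma_add_one (x : ℝ) :
    (Real.Gamma x)⁻¹ = x * (Real.Gamma (x + 1))⁻¹ := by
  rcases eq_or_ne x 0 with rfl | hx
  · simp
  · rw [Real.Gamma_add_one hx, mul_inv, mul_inv_cancel_left₀ hx]

section FracWeight

variable {α : ℝ}

lemma fracWeight_zero (α : ℝ) :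
    fracWeight α 0 = Real.Gamma (α + 1) / Real.Gamma (α / 2 + 1) ^ 2 := by
  simp [fracWeight, sq]

lemma fracWeight_neg (α : ℝ) (k : ℤ) : fracWeight α (-k) = fracWeight α k := by
  simp only [fracWeight, zpow_neg, ← inv_zpow, inv_neg_one, Int.cast_neg, sub_neg_eq_add,
    ← sub_eq_add_neg]
  rw [mul_comm (Real.Gamma (α / 2 + k + 1))]

lemma fracWeight_recurrence (α : ℝ) (k : ℤ) :
    (k + 1 + α / 2) * fracWeight α (k + 1) = (k - α / 2) * fracWeight α k := by
  have hminus : α / 2 - ((k + 1 : ℤ) : ℝ) + 1 = α / 2 - k := by push_cast; ring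
  have hplus : α / 2 + ((k + 1 : ℤ) : ℝ) + 1 = (α / 2 + k + 1) + 1 := by push_cast; ring
  simp only [fracWeight, hminus, hplus, zpow_add_one₀ (neg_ne_zero.2 (one_ne_zero (α := ℝ))),
    div_eq_mul_inv _ (_ * _), mul_inv]
  rw [inv_Gamma_eq_self_mul_inv_Gamma_add_one (α / 2 - k),
    inv_Gamma_eq_self_mul_inv_Gamma_add_one (α / 2 + k + 1)]
  ring

lemma summable_fracWeight (hα : 0 < α) : Summable (fracWeight α) := by
  suffices h : Summable fun n : ℕ => fracWeight α n from
    .of_nat_of_neg h (by simpa only [fracWeight_neg] using h)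
  obtain ⟨N, hN⟩ := exists_nat_ge (α / 2)
  have abs_recurrence (n : ℕ) (hn : α / 2 ≤ n) :
      (n + 1 + α / 2) * |fracWeight α (n + 1 : ℕ)| = (n - α / 2) * |fracWeight α n| := by
    have h := congrArg abs (fracWeight_recurrence α n)
    rw [abs_mul, abs_mul, Int.cast_natCast, abs_of_pos (by positivity),
      abs_of_nonneg (sub_nonneg.2 hn)] at h
    exact_mod_cast h
  -- For `n ≥ α / 2` the recurrence makes `α |w_n|` the decrement of `(n + α / 2) |w_n|`.
  rw [← summable_nat_add_iff N, ← summable_abs_iff, ← summable_mul_left_iff hα.ne']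
  refine summable_of_le_sub_succ
    (g := fun n => ((n + N : ℕ) + α / 2) * |fracWeight α (n + N : ℕ)|)
    (fun n => by positivity) (fun n => by positivity) fun n => ?_
  have h := abs_recurrence (n + N) (hN.trans (by simp))
  rw [add_right_comm n 1 N]
  push_cast at h ⊢
  linarith

end FracWeight

section RieszSymbol

variable {α : ℝ}

/-- The Fourier symbol `|1 - exp (iθ)| ^ α` of the fractional centered difference of order `α`,
written through `|1 - exp (iθ)| ^ 2 = 2 - 2 cos θ`. -/
noncomputable def rieszSymbol (α θ : ℝ) : ℝ :=
  (2 - 2 * Real.cos θ) ^ (α / 2)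

lemma two_sub_two_mul_cos (θ : ℝ) : 2 - 2 * Real.cos θ = |2 * Real.sin (θ / 2)| ^ 2 := by
  rw [sq_abs, mul_pow, Real.sin_sq_eq_half_sub, mul_div_cancel₀ θ two_ne_zero]
  ring

lemma rieszSymbol_eq_abs_sin_rpow (α θ : ℝ) :
    rieszSymbol α θ = |2 * Real.sin (θ / 2)| ^ α := by
  rw [rieszSymbol, two_sub_two_mul_cos, ← Real.rpow_natCast_mul (abs_nonneg _)]
  congr 1
  push_cast
  ring

lemma rieszSymbol_zero (hα : α ≠ 0) : rieszSymbol α 0 = 0 := by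
  simp [rieszSymbol, hα]

lemma rieszSymbol_periodic (α : ℝ) : Function.Periodic (rieszSymbol α) (2 * π) := fun θ => by
  simp only [rieszSymbol, Real.cos_add_two_pi]

lemma continuous_rieszSymbol (hα : 0 ≤ α) : Continuous (rieszSymbol α) :=
  Continuous.rpow_const (by fun_prop) fun _ => Or.inr (by positivity)

lemma hasDerivAt_rieszSymbol (α : ℝ) {θ : ℝ} (hθ : Real.cos θ ≠ 1) :
    HasDerivAt (rieszSymbol α) (α * Real.sin θ / (2 - 2 * Real.cos θ) * rieszSymbol α θ) θ := by
  have hne : 2 - 2 * Real.cos θ ≠ 0 := fun h => hθ (by linarith)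
  have hbase : HasDerivAt (fun t => 2 - 2 * Real.cos t) (2 * Real.sin θ) θ := by
    simpa using ((Real.hasDerivAt_cos θ).const_mul 2).const_sub 2
  refine (hbase.rpow_const (p := α / 2) (Or.inl hne)).congr_deriv ?_
  rw [Real.rpow_sub_one hne, rieszSymbol]
  ring

lemma integral_rieszSymbol (hα : -1 < α) :
    ∫ θ in (0 : ℝ)..2 * π, rieszSymbol α θ = 2 * π * fracWeight α 0 := by
  have hhalf : Set.EqOn (rieszSymbol α) (fun θ => 2 ^ α * Real.sin (θ / 2) ^ α)
      (Set.uIcc 0 (2 * π)) := by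
    rw [Set.uIcc_of_le (by positivity)]
    rintro θ ⟨hθ0, hθ⟩
    have hsin : 0 ≤ Real.sin (θ / 2) :=
      Real.sin_nonneg_of_nonneg_of_le_pi (by linarith) (by linarith)
    simp only [rieszSymbol_eq_abs_sin_rpow]
    rw [abs_of_nonneg (by positivity), Real.mul_rpow zero_le_two hsin]
  rw [intervalIntegral.integral_congr hhalf, intervalIntegral.integral_const_mul,
    intervalIntegral.integral_comp_div (fun θ => Real.sin θ ^ α) two_ne_zero, zero_div,
    mul_div_cancel_left₀ π two_ne_zero, integral_sin_rpow hα, fracWeight_zero, smul_eq_mul,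
    Real.rpow_neg zero_le_two]
  field_simp

lemma hasDerivAt_exp_sub_exp_mul_rieszSymbol (α : ℝ) (z : ℂ) {θ : ℝ} (hθ : Real.cos θ ≠ 1) :
    HasDerivAt (fun t : ℝ => (Complex.exp (-(Complex.I * z * t)) -
        Complex.exp (-(Complex.I * (z + 1) * t))) * rieszSymbol α t)
      (Complex.I * (z + 1 + α / 2) *
          (Complex.exp (-(Complex.I * (z + 1) * θ)) * rieszSymbol α θ) -
        Complex.I * (z - α / 2) * (Complex.exp (-(Complex.I * z * θ)) * rieszSymbol α θ)) θ := by
  have hne : 1 - Complex.cos θ ≠ 0 := by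
    rw [sub_ne_zero, ← Complex.ofReal_cos]
    exact_mod_cast hθ.symm
  have hcot : (1 - Complex.exp (-(Complex.I * θ))) *
      (α * Complex.sin θ / (2 - 2 * Complex.cos θ)) =
        Complex.I * (α / 2) * (1 + Complex.exp (-(Complex.I * θ))) := by
    rw [show 2 - 2 * Complex.cos θ = 2 * (1 - Complex.cos θ) by ring]
    field_simp
    linear_combination α * one_sub_exp_mul_sin θ
  refine (((hasDerivAt_exp_neg_I_mul z θ).sub (hasDerivAt_exp_neg_I_mul (z + 1) θ)).mul
    (hasDerivAt_rieszSymbol α hθ).ofReal_comp).congr_deriv ?_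
  simp only [Pi.sub_apply, exp_neg_I_mul_add_one_mul]
  push_cast
  linear_combination Complex.exp (-(Complex.I * z * θ)) * rieszSymbol α θ * hcot

lemma fourierCoeffOn_rieszSymbol_recurrence (hα : 0 < α) (k : ℤ) :
    (k + 1 + α / 2 : ℂ) * fourierCoeffOn two_pi_pos (fun θ => (rieszSymbol α θ : ℂ)) (k + 1) =
      (k - α / 2) * fourierCoeffOn two_pi_pos (fun θ => (rieszSymbol α θ : ℂ)) k := by
  have hcont := continuous_rieszSymbol hα.le
  have hint (z : ℂ) : IntervalIntegrable
      (fun θ : ℝ => Complex.exp (-(Complex.I * z * θ)) * rieszSymbol α θ)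
      MeasureTheory.volume 0 (2 * π) := Continuous.intervalIntegrable (by fun_prop) _ _
  have hcos {θ : ℝ} (hθ : θ ∈ Set.Ioo 0 (2 * π)) : Real.cos θ ≠ 1 := fun h =>
    hθ.1.ne' ((Real.cos_eq_one_iff_of_lt_of_lt (by linarith [hθ.1, pi_pos]) hθ.2).1 h)
  have hboundary : rieszSymbol α (2 * π) = 0 := by
    rw [(rieszSymbol_periodic α).eq, rieszSymbol_zero hα.ne']
  have hFTC := intervalIntegral.integral_eq_sub_of_hasDerivAt_of_le two_pi_pos.le
    (Continuous.continuousOn (by fun_prop))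
    (fun θ hθ => hasDerivAt_exp_sub_exp_mul_rieszSymbol α k (hcos hθ))
    (((hint (k + 1)).const_mul _).sub ((hint k).const_mul _))
  rw [intervalIntegral.integral_sub ((hint _).const_mul _) ((hint _).const_mul _),
    intervalIntegral.integral_const_mul, intervalIntegral.integral_const_mul, hboundary,
    rieszSymbol_zero hα.ne', Complex.ofReal_zero, mul_zero, mul_zero, sub_zero] at hFTC
  rw [fourierCoeffOn_two_pi, fourierCoeffOn_two_pi, Int.cast_add, Int.cast_one]
  refine mul_left_cancel₀ Complex.I_ne_zero ?_
  linear_combination (2 * π : ℂ)⁻¹ * hFTC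

theorem fourierCoeffOn_rieszSymbol (hα : 0 < α) :
    fourierCoeffOn two_pi_pos (fun θ => (rieszSymbol α θ : ℂ)) = fun k => (fracWeight α k : ℂ) := by
  refine eq_of_int_recurrence (p := fun k => (k + 1 + α / 2 : ℂ)) (q := fun k => (k - α / 2 : ℂ))
    (fun k hk => ?_) (fun k hk => ?_) (fourierCoeffOn_rieszSymbol_recurrence hα) (fun k => ?_) ?_
  · have : (0 : ℝ) < k + 1 + α / 2 := by positivity
    exact_mod_cast this.ne'
  · have : (k - α / 2 : ℝ) < 0 := by linarith [Int.cast_lt_zero (R := ℝ).2 hk]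
    exact_mod_cast this.ne
  · exact_mod_cast fracWeight_recurrence α k
  · rw [fourierCoeffOn_two_pi]
    simp only [Int.cast_zero, mul_zero, zero_mul, neg_zero, Complex.exp_zero, one_mul]
    rw [intervalIntegral.integral_ofReal, integral_rieszSymbol (by linarith)]
    push_cast
    field_simp

lemma hasSum_fracWeight_mul_exp (hα : 0 < α) (θ : ℝ) :
    HasSum (fun k : ℤ => (fracWeight α k : ℂ) * Complex.exp (Complex.I * k * θ))
      (rieszSymbol α θ) := by
  have hcoeff := fourierCoeffOn_rieszSymbol hα
  have hsum : Summable fun k : ℤ => (fracWeight α k : ℂ) :=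
    Complex.ofRealCLM.summable (summable_fracWeight hα)
  simpa only [hcoeff] using hasSum_fourierCoeffOn_mul_exp
    (f := fun t => (rieszSymbol α t : ℂ))
    (Complex.continuous_ofReal.comp (continuous_rieszSymbol hα.le))
    ((rieszSymbol_periodic α).comp Complex.ofReal) (hcoeff ▸ hsum) θ

end RieszSymbol

theorem fracWeight_fourier_symbol_general (α : ℝ) (hα : 0 < α) (θ : ℝ) :
    Summable (fun k : ℤ => ‖(fracWeight α k : ℂ) * Complex.exp (Complex.I * k * θ)‖) ∧
    (∑' k : ℤ, (fracWeight α k : ℂ) * Complex.exp (Complex.I * k * θ)) =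
      (((2 - 2 * Real.cos θ) ^ (α / 2) : ℝ) : ℂ) ∧
    ((2 - 2 * Real.cos θ) ^ (α / 2) : ℝ) = |2 * Real.sin (θ / 2)| ^ α :=
  have hseries := hasSum_fracWeight_mul_exp hα θ
  ⟨hseries.summable.norm, hseries.tsum_eq, rieszSymbol_eq_abs_sin_rpow α θ⟩

/-- Let `α` be real with `0 < α ≤ 2`. Then for every real `θ`, the series
`Σ_{k ∈ ℤ} w_k^α e^{i k θ}` converges absolutely and equals
`(2 − 2 cos θ)^{α/2} = |2 sin(θ/2)|^α`. -/
theorem fracWeight_fourier_symbol (α : ℝ) (hα0 : 0 < α) (hα2 : α ≤ 2) (θ : ℝ) :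
    Summable (fun k : ℤ => ‖(fracWeight α k : ℂ) * Complex.exp (Complex.I * k * θ)‖) ∧
    (∑' k : ℤ, (fracWeight α k : ℂ) * Complex.exp (Complex.I * k * θ)) =
      (((2 - 2 * Real.cos θ) ^ (α / 2) : ℝ) : ℂ) ∧
    ((2 - 2 * Real.cos θ) ^ (α / 2) : ℝ) = |2 * Real.sin (θ / 2)| ^ α :=
  fracWeight_fourier_symbol_general α hα0 θ
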